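/- Let k : ℕ × ℕ → ℕ be defined by k(n, m) = n + 1 if m = 0 and k(n, m) = |n − m| (the absolute difference) if m ≠ 0. Then k is a total recursive (computable) function, and for every numeral system d, k is λ-definable with respect to d if and only if every total recursive function ℕ^p → ℕ is λ-definable with respect to d. -/

import Mathlib

/-- Untyped λ-terms in de Bruijn notation. -/
inductive Lam : Type
  | var : ℕ → Lam
  | app : Lam → Lam → Lam
  | lam : Lam → Lam
  deriving DecidableEq

namespace Lam

/-- Shift by one the free variables with index ≥ `d`. -/
def lift (d : ℕ) : Lam → Lam
  | var n => if n < d then var n else var (n + 1)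
  | app M N => app (lift d M) (lift d N)
  | lam M => lam (lift (d + 1) M)

/-- Capture-avoiding substitution of `N` for the free variable of index `n`. -/
def subst : Lam → ℕ → Lam → Lam
  | var m, n, N => if m = n then N else if n < m then var (m - 1) else var m
  | app M₁ M₂, n, N => app (subst M₁ n N) (subst M₂ n N)
  | lam M, n, N => lam (subst M (n + 1) (lift 0 N))

/-- One-step β-reduction (contraction of a β-redex anywhere in the term). -/
inductive Step : Lam → Lam → Prop
  | beta (M N : Lam) : Step (app (lam M) N) (subst M 0 N)
  | appL {M M' : Lam} (N : Lam) : Step M M' → Step (app M N) (app M' N)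
  | appR (M : Lam) {N N' : Lam} : Step N N' → Step (app M N) (app M N')
  | lam {M M' : Lam} : Step M M' → Step (Lam.lam M) (Lam.lam M')

/-- β-equivalence: the equivalence relation generated by one-step β-reduction. -/
def BetaEq : Lam → Lam → Prop := Relation.EqvGen Step

/-- The variable of index `n` occurs free in the term. -/
def HasFree : Lam → ℕ → Prop
  | var m, n => m = n
  | app M N, n => HasFree M n ∨ HasFree N n
  | lam M, n => HasFree M (n + 1)

/-- A term is closed if it has no free variables. -/
def Closed (M : Lam) : Prop := ∀ n, ¬ HasFree M n

/-- A term is β-normal: it contains no β-redex. -/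
def IsBetaNormal : Lam → Prop
  | app (lam _) _ => False
  | app M N => IsBetaNormal M ∧ IsBetaNormal N
  | lam M => IsBetaNormal M
  | var _ => True

/-- A term is βη-normal: it contains no β-redex and no η-redex
`λx.(M x)` with `x` not free in `M`. -/
def IsBetaEtaNormal : Lam → Prop
  | app (lam _) _ => False
  | app M N => IsBetaEtaNormal M ∧ IsBetaEtaNormal N
  | lam (app M (var 0)) => HasFree M 0 ∧ IsBetaEtaNormal (app M (var 0))
  | lam M => IsBetaEtaNormal M
  | var _ => True

/-- `I = λx.x`. -/
def I : Lam := lam (var 0)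

/-- `T = λxλy.x`. -/
def T : Lam := lam (lam (var 1))

/-- `F = λxλy.y`. -/
def F : Lam := lam (lam (var 0))

/-- The pair `<M,N> = λx.(x M N)` (the binder shifts the free variables of `M,N`). -/
def pair (M N : Lam) : Lam := lam (app (app (var 0) (lift 0 M)) (lift 0 N))

end Lam

/-- Iterated application `F M₁ … Mₚ`. -/
def Lam.applyAll : Lam → List Lam → Lam
  | G, [] => G
  | G, M :: Ms => Lam.applyAll (Lam.app G M) Ms

/-- The binary function `k` : `k n m = n + 1` if `m = 0` and `k n m = |n - m|`
(the absolute difference) otherwise. -/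
def kFun (n m : ℕ) : ℕ := if m = 0 then n + 1 else Nat.dist n m

/-!
With `k` at hand, `k n 0 = n + 1` is the successor, `k (n + 1) 1 = n` the predecessor, and `k n n`
is `1` or `0` according to whether `n` is zero. By Böhm's theorem some closed term sends the
distinct βη-normal forms `d 1` and `d 0` to the two truth values, which turns the last fact into a
test for zero. A sequence of closed terms with successor, predecessor and zero test represents every
partial recursive function.

Böhm's theorem is proved in the closed term model: the head variables of two distinct normal forms
are replaced by permutators `λy₁ … yₙ x. x y₁ … yₙ` whose arities are so far apart that two neutral
terms with different heads, or different numbers of arguments, await different numbers of further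
arguments; two neutral terms that agree in both respects differ in some argument, which can be
extracted from both.
-/

/-- A combinatory algebra: a set with a binary application and elements `K`, `S` satisfying Curry's
equations. Recursion theory and the separation gadgets below need nothing more. -/
class CombinatoryAlgebra (A : Type*) where
  ap : A → A → A
  K : A
  S : A
  K_ap (a b : A) : ap (ap K a) b = a
  S_ap (a b c : A) : ap (ap (ap S a) b) c = ap (ap a c) (ap b c)

namespace CombinatoryAlgebra

infixl:75 "⋄" => ap

attribute [simp] K_ap S_ap

variable {A : Type*}

/-- Polynomials over `A`: applicative terms with constants from `A` and de Bruijn variables. -/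
inductive CombPoly (A : Type*) : Type _
  | var : ℕ → CombPoly A
  | const : A → CombPoly A
  | app : CombPoly A → CombPoly A → CombPoly A

infixl:75 "⋆" => CombPoly.app

prefix:max "↟" => CombPoly.const

variable [CombinatoryAlgebra A]

namespace CombPoly

/-- The value of a polynomial; a variable outside the list `e` evaluates to the junk value `K`. -/
@[simp] def eval (e : List A) : CombPoly A → A
  | var n => e.getD n K
  | const a => a
  | app p q => eval e p ⋄ eval e q

/-- Bracket abstraction of the variable `0`. -/
def abs : CombPoly A → CombPoly A
  | var 0 => ↟S ⋆ ↟K ⋆ ↟K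
  | var (n + 1) => ↟K ⋆ var n
  | const a => ↟(K ⋄ a)
  | app p q => ↟S ⋆ abs p ⋆ abs q

@[simp] theorem eval_abs (e : List A) (p : CombPoly A) (x : A) :
    eval e (abs p) ⋄ x = eval (x :: e) p := by
  induction p with
  | var n => cases n <;> simp [abs]
  | const a => simp [abs]
  | app p q ihp ihq => simp [abs, ihp, ihq]

end CombPoly

prefix:60 "ƛ" => CombPoly.abs

open CombPoly

/-- The identity combinator. -/
def I : A := eval [] (ƛ .var 0)

@[simp] theorem I_ap (x : A) : (I : A) ⋄ x = x := by simp [I]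

/-- The pairing combinator `λxyf. f x y`, whose projections are application to `K` and `K ⋄ I`. -/
def pair : A := eval [] (ƛ ƛ ƛ .var 0 ⋆ .var 2 ⋆ .var 1)

@[simp] theorem pair_ap (x y f : A) : pair ⋄ x ⋄ y ⋄ f = f ⋄ x ⋄ y := by simp [pair]

theorem exists_fixedPoint (f : A) : ∃ x : A, f ⋄ x = x := by
  let w : A := eval [] (ƛ ↟f ⋆ (.var 0 ⋆ .var 0))
  have hw (x : A) : w ⋄ x = f ⋄ (x ⋄ x) := by simp [w]
  exact ⟨w ⋄ w, (hw w).symm⟩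

/-- Iterated application `x a₁ … aₙ`. -/
def applyAll (x : A) (l : List A) : A := l.foldl ap x

@[simp] theorem applyAll_nil (x : A) : applyAll x [] = x := rfl

@[simp] theorem applyAll_cons (x a : A) (l : List A) :
    applyAll x (a :: l) = applyAll (x ⋄ a) l := rfl

@[simp] theorem applyAll_append (x : A) (l l' : List A) :
    applyAll x (l ++ l') = applyAll (applyAll x l) l' := List.foldl_append

/-! ### Separability and Böhm permutators -/

/-- `x` and `y` can be sent to arbitrary targets by applying them to the same arguments. -/
def Separable (x y : A) : Prop :=
  ∀ a b, ∃ us, applyAll x us = a ∧ applyAll y us = b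

namespace Separable

theorem symm {x y : A} (h : Separable x y) : Separable y x := fun a b =>
  let ⟨us, hx, hy⟩ := h b a
  ⟨us, hy, hx⟩

theorem of_applyAll {x y : A} (us : List A) (h : Separable (applyAll x us) (applyAll y us)) :
    Separable x y := fun a b =>
  let ⟨ws, hx, hy⟩ := h a b
  ⟨us ++ ws, by rw [applyAll_append, hx], by rw [applyAll_append, hy]⟩

theorem exists_ap_eq {x y : A} (h : Separable x y) (a b : A) : ∃ g, g ⋄ x = a ∧ g ⋄ y = b := by
  have exists_evaluator (us : List A) : ∃ g : A, ∀ x, g ⋄ x = applyAll x us := by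
    induction us using List.reverseRecOn with
    | nil => exact ⟨I, by simp⟩
    | append_singleton us u ih =>
      obtain ⟨g, hg⟩ := ih
      exact ⟨eval [] (ƛ ↟g ⋆ .var 0 ⋆ ↟u), by simp [hg]⟩
  obtain ⟨us, hx, hy⟩ := h a b
  obtain ⟨g, hg⟩ := exists_evaluator us
  exact ⟨g, by rw [hg, hx], by rw [hg, hy]⟩

end Separable

/-- `constFn n = λx y₁ … yₙ. x`. -/
def constFn : ℕ → A
  | 0 => I
  | n + 1 => eval [] (ƛ ƛ ↟(constFn n) ⋆ .var 1)

theorem applyAll_constFn {n : ℕ} (x : A) {l : List A} (hl : l.length = n) :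
    applyAll (constFn n ⋄ x) l = x := by
  subst hl
  induction l with
  | nil => simp [constFn]
  | cons y l ih => simp [constFn, ih]

theorem applyAll_selector (l : List A) {i : ℕ} (hi : i < l.length) :
    applyAll (constFn i ⋄ constFn (l.length - i - 1)) l = l[i] := by
  calc applyAll (constFn i ⋄ constFn (l.length - i - 1)) l
    _ = applyAll (constFn i ⋄ constFn (l.length - i - 1)) (l.take i ++ l[i] :: l.drop (i + 1)) := by
      rw [List.getElem_cons_drop, List.take_append_drop]
    _ = l[i] := by
      rw [applyAll_append, applyAll_constFn _ (by simp [hi.le]), applyAll_cons,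
        applyAll_constFn _ (by simp; omega)]

/-- `rotate n = λh y₁ … yₙ x. h x y₁ … yₙ`. -/
def rotate : ℕ → A
  | 0 => I
  | n + 1 => eval [] (ƛ ƛ ↟(rotate n) ⋆ (ƛ .var 2 ⋆ .var 0 ⋆ .var 1))

theorem applyAll_rotate (h x : A) (l : List A) :
    applyAll (rotate l.length ⋄ h) l ⋄ x = applyAll (h ⋄ x) l := by
  induction l generalizing h with
  | nil => simp [rotate]
  | cons y l ih => simp [rotate, ih]

/-- Böhm's permutator `λy₁ … yₙ x. x y₁ … yₙ`. -/
def permutator (n : ℕ) : A := rotate n ⋄ I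

theorem applyAll_permutator {n : ℕ} {l : List A} (hl : l.length = n) (x : A) :
    applyAll (permutator n) l ⋄ x = applyAll x l := by
  subst hl
  simp [permutator, applyAll_rotate]

/- The first head variable fires `e + 1` arguments earlier than the second, so the `r`-th extra
argument is called by the first term and merely passed along by the second. -/
theorem separable_permutator_of_lt {n m r r' : ℕ} {l l' : List A} (hn : l.length + r = n)
    (hm : l'.length + r' = m) (hr : r < r') :
    Separable (applyAll (permutator n) l) (applyAll (permutator m) l') := fun a b => by
  obtain ⟨e, rfl⟩ := Nat.exists_eq_add_of_lt hr
  let pad : List A := .replicate r I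
  let rest : List A := .replicate e I ++ [constFn m ⋄ b]
  let z : A := constFn (n + (e + 1)) ⋄ a
  refine ⟨pad ++ z :: rest, ?_, ?_⟩
  · calc applyAll (applyAll (permutator n) l) (pad ++ z :: rest)
      _ = applyAll (applyAll (permutator n) (l ++ pad) ⋄ z) rest := by simp
      _ = applyAll z (l ++ pad ++ rest) := by
        rw [applyAll_permutator (by simp [pad, hn]), ← applyAll_append]
      _ = a := applyAll_constFn a (by simp [pad, rest]; omega)
  · calc applyAll (applyAll (permutator m) l') (pad ++ z :: rest)
      _ = applyAll (permutator m) (l' ++ pad ++ z :: .replicate e I) ⋄ (constFn m ⋄ b) := by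
        simp [rest]
      _ = b := by
        have h_length : (l' ++ pad ++ z :: .replicate e I).length = m := by simp [pad]; omega
        rw [applyAll_permutator h_length, applyAll_constFn b h_length]

theorem separable_permutator_of_ne {n m r r' : ℕ} {l l' : List A} (hn : l.length + r = n)
    (hm : l'.length + r' = m) (hr : r ≠ r') :
    Separable (applyAll (permutator n) l) (applyAll (permutator m) l') :=
  hr.lt_or_gt.elim (separable_permutator_of_lt hn hm)
    fun h => (separable_permutator_of_lt hm hn h).symm

theorem exists_extract_argument {n m i : ℕ} (hn : m ≤ n) (hi : i < m) :
    ∃ us : List A, ∀ (l : List A) (hl : l.length = m),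
      applyAll (applyAll (permutator n) l) us = l[i] := by
  let pad : List A := .replicate (n - m) I
  refine ⟨pad ++ [constFn i ⋄ constFn (n - i - 1)], fun l hl => ?_⟩
  have h_length : (l ++ pad).length = n := by simp [pad]; omega
  have h_selector := applyAll_selector (l ++ pad) (by omega : i < (l ++ pad).length)
  calc applyAll (applyAll (permutator n) l) (pad ++ [constFn i ⋄ constFn (n - i - 1)])
    _ = applyAll (permutator n) (l ++ pad) ⋄ (constFn i ⋄ constFn (n - i - 1)) := by simp
    _ = applyAll (constFn i ⋄ constFn (n - i - 1)) (l ++ pad) := applyAll_permutator h_length _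
    _ = l[i] := by rw [← h_length, h_selector, List.getElem_append_left]

theorem Separable.of_getElem {n i : ℕ} {l l' : List A} (hl : l.length = l'.length)
    (hn : l.length ≤ n) (hi : i < l.length) (h : Separable l[i] l'[i]) :
    Separable (applyAll (permutator n) l) (applyAll (permutator n) l') := by
  obtain ⟨us, hus⟩ := exists_extract_argument (A := A) hn hi
  refine .of_applyAll us ?_
  rwa [hus l rfl, hus l' hl.symm]

/-! ### Computable functions in an adequate numeral system -/

/-- A sequence of numerals is adequate if successor, predecessor and the test for zero are
representable, the truth values being `K` and `K ⋄ I`. -/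
structure Adequate (D : ℕ → A) : Prop where
  exists_succ : ∃ s, ∀ n, s ⋄ D n = D (n + 1)
  exists_pred : ∃ p, ∀ n, p ⋄ D (n + 1) = D n
  exists_isZero : ∃ z, z ⋄ D 0 = K ∧ ∀ n, z ⋄ D (n + 1) = K ⋄ I

/-- The infinite list `⟨D 0, ⟨D 0, …⟩⟩`. -/
noncomputable def zeros (D : ℕ → A) : A := (exists_fixedPoint (pair ⋄ D 0)).choose

theorem zeros_eq (D : ℕ → A) : pair ⋄ D 0 ⋄ zeros D = zeros D :=
  (exists_fixedPoint (pair ⋄ D 0)).choose_spec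

/-- Lists of numerals as nested pairs, padded with zeros so that taking heads and tails agrees with
`List.headI` and `List.tail` on the empty list too. -/
noncomputable def encode (D : ℕ → A) : List ℕ → A
  | [] => zeros D
  | n :: v => pair ⋄ D n ⋄ encode D v

section encode

variable (D : ℕ → A)

@[simp] theorem encode_nil : encode D [] = zeros D := rfl

@[simp] theorem encode_cons (n : ℕ) (v : List ℕ) :
    encode D (n :: v) = pair ⋄ D n ⋄ encode D v := rfl

theorem pair_headI_tail (v : List ℕ) : pair ⋄ D v.headI ⋄ encode D v.tail = encode D v := by
  cases v with
  | nil => exact zeros_eq D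
  | cons n v => rfl

@[simp] theorem encode_ap_fst (v : List ℕ) : encode D v ⋄ K = D v.headI := by
  simp [← pair_headI_tail D v]

@[simp] theorem encode_ap_snd (v : List ℕ) : encode D v ⋄ (K ⋄ I) = encode D v.tail := by
  simp [← pair_headI_tail D v]

/-- `curry D p` turns a function on encoded lists into a function of `p` successive numerals. -/
noncomputable def curry : ℕ → A
  | 0 => eval [] (ƛ .var 0 ⋆ ↟(zeros D))
  | p + 1 => eval [] (ƛ ƛ ↟(curry p) ⋆ (ƛ .var 2 ⋆ (↟pair ⋆ .var 1 ⋆ .var 0)))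

theorem applyAll_curry (g : A) (v : List ℕ) :
    applyAll (curry D v.length ⋄ g) (v.map D) = g ⋄ encode D v := by
  induction v generalizing g with
  | nil => simp [curry]
  | cons n v ih => simp [curry, ih]

/-- `F` computes `f` on encoded lists wherever `f` is defined. -/
def Represents (F : A) (f : List ℕ →. List ℕ) : Prop :=
  ∀ v, ∀ w ∈ f v, F ⋄ encode D v = encode D w

end encode

namespace Adequate

variable {D : ℕ → A}

theorem exists_represents_fix (hD : Adequate D) {F : A} {f : List ℕ →. List ℕ}
    (hF : Represents D F f) :
    ∃ R : A, Represents D R (PFun.fix fun v => (f v).map fun v =>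
      if v.headI = 0 then Sum.inl v.tail else Sum.inr v.tail) := by
  obtain ⟨z, hz₀, hz₁⟩ := hD.exists_isZero
  obtain ⟨R, hR⟩ := exists_fixedPoint (eval [] (ƛ ƛ ↟z ⋆ (↟F ⋆ .var 0 ⋆ ↟K)
    ⋆ (↟F ⋆ .var 0 ⋆ ↟(K ⋄ I)) ⋆ (.var 1 ⋆ (↟F ⋆ .var 0 ⋆ ↟(K ⋄ I)))))
  have hR_ap (x : A) :
      R ⋄ x = z ⋄ (F ⋄ x ⋄ K) ⋄ (F ⋄ x ⋄ (K ⋄ I)) ⋄ (R ⋄ (F ⋄ x ⋄ (K ⋄ I))) := by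
    conv_lhs => rw [← hR]
    simp
  refine ⟨R, fun v w hw => PFun.fixInduction' hw (fun v hv => ?_) fun v v' _ hv ih => ?_⟩
  · obtain ⟨u, hu, huw⟩ := (Part.mem_map_iff _).1 hv
    split_ifs at huw with h₀
    cases huw
    rw [hR_ap, hF v u hu]
    simp [h₀, hz₀]
  · obtain ⟨u, hu, huv⟩ := (Part.mem_map_iff _).1 hv
    split_ifs at huv with h₀
    cases huv
    obtain ⟨n, hn⟩ := Nat.exists_eq_succ_of_ne_zero h₀
    rw [hR_ap, hF v u hu]
    simp [hn, hz₁, ih]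

theorem exists_represents_case (hD : Adequate D) {F G : A} {f g : List ℕ →. List ℕ}
    (hF : Represents D F f) (hG : Represents D G g) :
    ∃ H : A, Represents D H fun v => v.headI.rec (f v.tail) fun n _ => g (n :: v.tail) := by
  obtain ⟨p, hp⟩ := hD.exists_pred
  obtain ⟨z, hz₀, hz₁⟩ := hD.exists_isZero
  refine ⟨eval [] (ƛ ↟z ⋆ (.var 0 ⋆ ↟K) ⋆ (↟F ⋆ (.var 0 ⋆ ↟(K ⋄ I)))
    ⋆ (↟G ⋆ (↟pair ⋆ (↟p ⋆ (.var 0 ⋆ ↟K)) ⋆ (.var 0 ⋆ ↟(K ⋄ I))))), fun v w hw => ?_⟩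
  cases hv : v.headI with
  | zero =>
    have hw_f : w ∈ f v.tail := by simpa [hv] using hw
    simp [hv, hz₀, hF _ w hw_f]
  | succ n =>
    have hw_g : w ∈ g (n :: v.tail) := by simpa [hv] using hw
    simp [hv, hz₁, hp, ← hG _ w hw_g]

open Turing.ToPartrec (Code) in
theorem exists_represents_code (hD : Adequate D) (c : Code) : ∃ F : A, Represents D F c.eval := by
  induction c with
  | zero' => exact ⟨pair ⋄ D 0, fun v w hw => by simp_all⟩
  | succ =>
    obtain ⟨s, hs⟩ := hD.exists_succ
    exact ⟨eval [] (ƛ ↟pair ⋆ (↟s ⋆ (.var 0 ⋆ ↟K)) ⋆ ↟(zeros D)), fun v w hw => by simp_all⟩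
  | tail => exact ⟨eval [] (ƛ .var 0 ⋆ ↟(K ⋄ I)), fun v w hw => by simp_all⟩
  | cons f fs ihf ihfs =>
    obtain ⟨F, hF⟩ := ihf
    obtain ⟨Fs, hFs⟩ := ihfs
    refine ⟨eval [] (ƛ ↟pair ⋆ (↟F ⋆ .var 0 ⋆ ↟K) ⋆ (↟Fs ⋆ .var 0)), fun v w hw => ?_⟩
    obtain ⟨u, hu, us, hus, rfl⟩ :
        ∃ u ∈ f.eval v, ∃ us ∈ fs.eval v, w = u.headI :: us := by simpa using hw
    simp [hF v u hu, hFs v us hus]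
  | comp f g ihf ihg =>
    obtain ⟨F, hF⟩ := ihf
    obtain ⟨G, hG⟩ := ihg
    refine ⟨eval [] (ƛ ↟F ⋆ (↟G ⋆ .var 0)), fun v w hw => ?_⟩
    rw [Code.comp_eval] at hw
    obtain ⟨u, hu, huw⟩ := Part.mem_bind_iff.1 hw
    simp [hG v u hu, hF u w huw]
  | case f g ihf ihg =>
    obtain ⟨F, hF⟩ := ihf
    obtain ⟨G, hG⟩ := ihg
    rw [Code.case_eval]
    exact hD.exists_represents_case hF hG
  | fix f ih =>
    obtain ⟨F, hF⟩ := ih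
    rw [Code.fix_eval]
    exact hD.exists_represents_fix hF

theorem exists_applyAll_eq (hD : Adequate D) {p : ℕ} {φ : (Fin p → ℕ) → ℕ} (hφ : Computable φ) :
    ∃ F : A, ∀ ns : Fin p → ℕ, applyAll F (List.ofFn fun i => D (ns i)) = D (φ ns) := by
  have hφ' : Computable fun v : List.Vector ℕ p => φ v.get := hφ.comp Primrec.vector_get'.to_comp
  obtain ⟨c, hc⟩ := Turing.ToPartrec.Code.exists_code (Nat.Partrec'.of_part hφ')
  obtain ⟨F, hF⟩ := hD.exists_represents_code c
  refine ⟨curry D p ⋄ eval [] (ƛ ↟F ⋆ .var 0 ⋆ ↟K), fun ns => ?_⟩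
  have hc_ns : [φ ns] ∈ c.eval (List.ofFn ns) := by
    rw [← List.Vector.toList_ofFn]
    exact (hc _).symm ▸ by simp [funext (List.Vector.get_ofFn ns)]
  have h_curry := applyAll_curry D (eval [] (ƛ ↟F ⋆ .var 0 ⋆ ↟K)) (List.ofFn ns)
  simpa [hF _ _ hc_ns, List.map_ofFn, Function.comp_def] using h_curry

end Adequate

end CombinatoryAlgebra

namespace Lam

/-! ### Free variables and β-equivalence -/

/-- All free variables of `M` have index less than `k`. -/
def FreeBelow (k : ℕ) (M : Lam) : Prop := ∀ n, HasFree M n → n < k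

@[simp] theorem freeBelow_var {k n : ℕ} : FreeBelow k (var n) ↔ n < k := by
  simp [FreeBelow, HasFree]

@[simp] theorem freeBelow_app {k : ℕ} {M N : Lam} :
    FreeBelow k (app M N) ↔ FreeBelow k M ∧ FreeBelow k N := by
  simp only [FreeBelow, HasFree, or_imp, forall_and]

@[simp] theorem freeBelow_lam {k : ℕ} {M : Lam} : FreeBelow k (lam M) ↔ FreeBelow (k + 1) M := by
  refine ⟨fun h n hn => ?_, fun h n hn => Nat.lt_of_succ_lt_succ (h _ hn)⟩
  cases n with
  | zero => exact k.succ_pos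
  | succ n => exact Nat.succ_lt_succ (h n hn)

theorem closed_iff_freeBelow_zero {M : Lam} : Closed M ↔ FreeBelow 0 M := by
  simp [Closed, FreeBelow]

theorem FreeBelow.lift_eq {k : ℕ} {M : Lam} (h : FreeBelow k M) : lift k M = M := by
  induction M generalizing k with
  | var n => simp_all [lift]
  | app M N ihM ihN => simp_all [lift]
  | lam M ih => simp_all [lift]

theorem FreeBelow.subst_eq {k : ℕ} {M : Lam} (h : FreeBelow k M) (N : Lam) : subst M k N = M := by
  induction M generalizing k N with
  | var n =>
    rw [freeBelow_var] at h
    rw [subst, if_neg h.ne, if_neg h.le.not_gt]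
  | app M P ihM ihP => simp_all [subst]
  | lam M ih => simp_all [subst]

theorem FreeBelow.mono {k l : ℕ} {M : Lam} (h : FreeBelow k M) (hkl : k ≤ l) : FreeBelow l M :=
  fun n hn => (h n hn).trans_le hkl

namespace Closed

variable {M N : Lam}

theorem freeBelow (h : Closed M) (k : ℕ) : FreeBelow k M :=
  (closed_iff_freeBelow_zero.1 h).mono k.zero_le

theorem lift_eq (h : Closed M) (k : ℕ) : lift k M = M := (h.freeBelow k).lift_eq

theorem subst_eq (h : Closed M) (k : ℕ) (N : Lam) : subst M k N = M := (h.freeBelow k).subst_eq N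

theorem app (hM : Closed M) (hN : Closed N) : Closed (app M N) :=
  fun n hn => hn.elim (hM n) (hN n)

theorem applyAll {Ms : List Lam} (hM : Closed M) (hMs : ∀ N ∈ Ms, Closed N) :
    Closed (applyAll M Ms) := by
  induction Ms generalizing M with
  | nil => exact hM
  | cons N Ms ih =>
    rw [List.forall_mem_cons] at hMs
    exact ih (hM.app hMs.1) hMs.2

end Closed

namespace BetaEq

variable {M M' N N' P : Lam}

theorem refl (M : Lam) : BetaEq M M := Relation.EqvGen.refl M

theorem symm (h : BetaEq M N) : BetaEq N M := Relation.EqvGen.symm _ _ h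

theorem trans (h : BetaEq M N) (h' : BetaEq N P) : BetaEq M P := Relation.EqvGen.trans _ _ _ h h'

theorem beta (M N : Lam) : BetaEq (.app (.lam M) N) (subst M 0 N) := .rel _ _ (.beta M N)

theorem app_left (N : Lam) (h : BetaEq M M') : BetaEq (.app M N) (.app M' N) := by
  induction h with
  | rel _ _ h => exact .rel _ _ (.appL N h)
  | refl _ => exact refl _
  | symm _ _ _ ih => exact ih.symm
  | trans _ _ _ _ _ ih ih' => exact ih.trans ih'

theorem app_right (M : Lam) (h : BetaEq N N') : BetaEq (.app M N) (.app M N') := by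
  induction h with
  | rel _ _ h => exact .rel _ _ (.appR M h)
  | refl _ => exact refl _
  | symm _ _ _ ih => exact ih.symm
  | trans _ _ _ _ _ ih ih' => exact ih.trans ih'

theorem app (hM : BetaEq M M') (hN : BetaEq N N') : BetaEq (.app M N) (.app M' N') :=
  (hM.app_left N).trans (hN.app_right M')

end BetaEq

/-! ### The closed term model -/

/-- The type of closed λ-terms. -/
abbrev ClosedTerm : Type := {M : Lam // Closed M}

/-- β-equivalence of closed terms. -/
instance closedTermSetoid : Setoid ClosedTerm where
  r M N := BetaEq M N
  iseqv := ⟨fun M => .refl M, .symm, .trans⟩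

/-- The closed term model: closed λ-terms modulo β-equivalence. -/
def ClosedModel : Type := Quotient closedTermSetoid

/-- The class of a closed term in the closed term model. -/
def Closed.toModel {M : Lam} (h : Closed M) : ClosedModel := Quotient.mk _ ⟨M, h⟩

theorem Closed.toModel_congr {M N : Lam} (h : M = N) (hM : Closed M) (hN : Closed N) :
    hM.toModel = hN.toModel := by
  subst h
  rfl

theorem Closed.toModel_eq_iff {M N : Lam} (hM : Closed M) (hN : Closed N) :
    hM.toModel = hN.toModel ↔ BetaEq M N :=
  ⟨fun h => Quotient.exact h, fun h => Quotient.sound h⟩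

/-- A closed term representing `x`. -/
noncomputable def ClosedModel.out (x : ClosedModel) : ClosedTerm := Quotient.out x

theorem ClosedModel.toModel_out (x : ClosedModel) : x.out.2.toModel = x := Quotient.out_eq x

theorem closed_T : Closed T := by simp [closed_iff_freeBelow_zero, T]

/-- The combinator `S = λxλyλz.(x z)(y z)`. -/
def S : Lam := lam (lam (lam (app (app (var 2) (var 0)) (app (var 1) (var 0)))))

theorem closed_S : Closed S := by simp [closed_iff_freeBelow_zero, S]

theorem betaEq_T {M : Lam} (hM : Closed M) (N : Lam) : BetaEq (app (app T M) N) M := by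
  have h_first : BetaEq (app T M) (lam M) := by
    simpa [T, subst, hM.lift_eq] using BetaEq.beta (lam (var 1)) M
  have h_second : BetaEq (app (lam M) N) M := by
    simpa [hM.subst_eq] using BetaEq.beta M N
  exact (h_first.app_left N).trans h_second

theorem betaEq_S {M N : Lam} (hM : Closed M) (hN : Closed N) (P : Lam) :
    BetaEq (app (app (app S M) N) P) (app (app M P) (app N P)) := by
  have h_first : BetaEq (app S M)
      (lam (lam (app (app M (var 0)) (app (var 1) (var 0))))) := by
    simpa [S, subst, hM.lift_eq] using
      BetaEq.beta (lam (lam (app (app (var 2) (var 0)) (app (var 1) (var 0))))) M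
  have h_second : BetaEq (app (lam (lam (app (app M (var 0)) (app (var 1) (var 0))))) N)
      (lam (app (app M (var 0)) (app N (var 0)))) := by
    simpa [subst, hN.lift_eq, hM.subst_eq] using
      BetaEq.beta (lam (app (app M (var 0)) (app (var 1) (var 0)))) N
  have h_third : BetaEq (app (lam (app (app M (var 0)) (app N (var 0)))) P)
      (app (app M P) (app N P)) := by
    simpa [subst, hM.subst_eq, hN.subst_eq] using
      BetaEq.beta (app (app M (var 0)) (app N (var 0))) P
  exact (((h_first.app_left N).trans h_second).app_left P).trans h_third

instance : CombinatoryAlgebra ClosedModel where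
  ap := Quotient.map₂ (fun M N => ⟨app M N, M.2.app N.2⟩) fun _ _ hM _ _ hN => hM.app hN
  K := closed_T.toModel
  S := closed_S.toModel
  K_ap := by
    rintro ⟨M, hM⟩ ⟨N, hN⟩
    exact (((closed_T.app hM).app hN).toModel_eq_iff hM).2 (betaEq_T hM N)
  S_ap := by
    rintro ⟨M, hM⟩ ⟨N, hN⟩ ⟨P, hP⟩
    exact ((((closed_S.app hM).app hN).app hP).toModel_eq_iff ((hM.app hP).app (hN.app hP))).2
      (betaEq_S hM hN P)

/-! ### Interpretation of open terms in the closed term model -/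

open Stream'

/-- Simultaneous substitution of the closed terms `σ` for the free variables with index `≥ k`. -/
def inst (σ : Stream' ClosedTerm) (k : ℕ) : Lam → Lam
  | var n => if n < k then var n else σ.get (n - k)
  | app M N => app (inst σ k M) (inst σ k N)
  | lam M => lam (inst σ (k + 1) M)

theorem freeBelow_inst (σ : Stream' ClosedTerm) (k : ℕ) (M : Lam) : FreeBelow k (inst σ k M) := by
  induction M generalizing k with
  | var n =>
    rw [inst]
    split_ifs with h
    · exact freeBelow_var.2 h
    · exact (σ.get (n - k)).2.freeBelow k
  | app M N ihM ihN => exact freeBelow_app.2 ⟨ihM k, ihN k⟩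
  | lam M ih => exact freeBelow_lam.2 (ih (k + 1))

theorem closed_inst (σ : Stream' ClosedTerm) (M : Lam) : Closed (inst σ 0 M) :=
  closed_iff_freeBelow_zero.2 (freeBelow_inst σ 0 M)

theorem FreeBelow.inst_eq {k : ℕ} {M : Lam} (h : FreeBelow k M) (σ : Stream' ClosedTerm) :
    inst σ k M = M := by
  induction M generalizing k with
  | var n => simp_all [inst]
  | app M N ihM ihN => simp_all [inst]
  | lam M ih => simp_all [inst]

theorem subst_inst (σ : Stream' ClosedTerm) (k : ℕ) (M : Lam) (N : ClosedTerm) :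
    subst (inst σ (k + 1) M) k N = inst (N :: σ) k M := by
  induction M generalizing k with
  | var n =>
    rcases lt_trichotomy n k with h | rfl | h
    · simp [inst, subst, h, h.ne, h.le.not_gt, h.trans k.lt_succ_self]
    · simp [inst, subst]
    · obtain ⟨e, rfl⟩ := Nat.exists_eq_add_of_lt h
      have h_get : k + e + 1 - k = e + 1 := by omega
      simp [inst, h_get, (σ.get e).2.subst_eq, show ¬ k + e < k by omega,
        show ¬ k + e + 1 < k by omega]
  | app M P ihM ihP => simp [inst, subst, ihM, ihP]
  | lam M ih => simp [inst, subst, N.2.lift_eq, ih]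

theorem inst_lift (σ : Stream' ClosedTerm) (k : ℕ) (M : Lam) (N : ClosedTerm) :
    inst (N :: σ) k (lift k M) = inst σ k M := by
  induction M generalizing k with
  | var n =>
    by_cases h : n < k
    · simp [lift, inst, h]
    · have h_get : n + 1 - k = n - k + 1 := by omega
      simp [lift, inst, h, h_get, show ¬ n + 1 < k by omega]
  | app M P ihM ihP => simp [inst, lift, ihM, ihP]
  | lam M ih => simp [inst, lift, ih]

/-- The value of an open term in the closed term model under the valuation `ρ`. -/
noncomputable def interp (ρ : Stream' ClosedModel) (M : Lam) : ClosedModel :=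
  (closed_inst (ρ.map ClosedModel.out) M).toModel

theorem Closed.interp_eq {M : Lam} (h : Closed M) (ρ : Stream' ClosedModel) :
    interp ρ M = h.toModel :=
  toModel_congr ((h.freeBelow 0).inst_eq _) _ h

theorem interp_var (ρ : Stream' ClosedModel) (n : ℕ) : interp ρ (var n) = ρ.get n :=
  (ρ.get n).toModel_out

theorem interp_app (ρ : Stream' ClosedModel) (M N : Lam) :
    interp ρ (app M N) = interp ρ M ⋄ interp ρ N := rfl

theorem interp_lam_ap (ρ : Stream' ClosedModel) (M : Lam) (x : ClosedModel) :
    interp ρ (lam M) ⋄ x = interp (x :: ρ) M := by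
  let σ := ρ.map ClosedModel.out
  have h_beta : BetaEq (app (inst σ 0 (lam M)) x.out) (inst (x.out :: σ) 0 M) :=
    subst_inst σ 0 M x.out ▸ BetaEq.beta (inst σ 1 M) x.out
  calc interp ρ (lam M) ⋄ x
    _ = interp ρ (lam M) ⋄ x.out.2.toModel := by rw [x.toModel_out]
    _ = (closed_inst (x.out :: σ) M).toModel :=
      (((closed_inst σ (lam M)).app x.out.2).toModel_eq_iff (closed_inst _ M)).2 h_beta
    _ = interp (x :: ρ) M := Closed.toModel_congr (by rw [map_cons]) _ _

theorem interp_lift (ρ : Stream' ClosedModel) (M : Lam) (x : ClosedModel) :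
    interp (x :: ρ) (lift 0 M) = interp ρ M :=
  Closed.toModel_congr (by rw [map_cons, inst_lift]) _ _

theorem interp_applyAll (ρ : Stream' ClosedModel) (M : Lam) (Ms : List Lam) :
    interp ρ (applyAll M Ms) = CombinatoryAlgebra.applyAll (interp ρ M) (Ms.map (interp ρ)) := by
  induction Ms generalizing M with
  | nil => rfl
  | cons N _ ih => exact ih (app M N)

/-! ### Normal forms -/

/-- The term is an abstraction. -/
@[simp] def IsAbs : Lam → Prop
  | lam _ => True
  | _ => False

theorem isBetaEtaNormal_app {M N : Lam} :
    IsBetaEtaNormal (app M N) ↔ ¬ IsAbs M ∧ IsBetaEtaNormal M ∧ IsBetaEtaNormal N := by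
  cases M <;> simp [IsBetaEtaNormal]

theorem isBetaEtaNormal_lam {M : Lam} : IsBetaEtaNormal (lam M) ↔
    IsBetaEtaNormal M ∧ ∀ N, M = app N (var 0) → HasFree N 0 := by
  rcases M with n | ⟨N, (_ | _) | _ | _⟩ | P <;> simp [IsBetaEtaNormal, and_comm]

theorem hasFree_lift_of_lt {d n : ℕ} (M : Lam) (h : n < d) :
    HasFree (lift d M) n ↔ HasFree M n := by
  induction M generalizing d n with
  | var m =>
    rw [lift]
    split_ifs with hm
    · rfl
    · simp only [HasFree]
      omega
  | app M N ihM ihN => simp [lift, HasFree, ihM h, ihN h]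
  | lam M ih => simp [lift, HasFree, ih (Nat.succ_lt_succ h)]

theorem not_hasFree_lift (d : ℕ) (M : Lam) : ¬ HasFree (lift d M) d := by
  induction M generalizing d with
  | var m =>
    rw [lift]
    split_ifs <;> simp only [HasFree] <;> omega
  | app M N ihM ihN => simp [lift, HasFree, ihM, ihN]
  | lam _ ih => exact ih (d + 1)

@[simp] theorem isAbs_lift {d : ℕ} {M : Lam} : IsAbs (lift d M) ↔ IsAbs M := by
  cases M with
  | var n =>
    rw [lift]
    split_ifs <;> rfl
  | _ => rfl

theorem eq_var_zero_of_lift {d : ℕ} {M : Lam} (h : lift (d + 1) M = var 0) : M = var 0 := by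
  cases M with
  | var n =>
    rw [lift] at h
    split_ifs at h
    · exact h
    · cases h
  | _ => cases h

theorem IsBetaEtaNormal.lift {M : Lam} (h : IsBetaEtaNormal M) (d : ℕ) :
    IsBetaEtaNormal (lift d M) := by
  induction M generalizing d with
  | var n =>
    rw [Lam.lift]
    split_ifs <;> trivial
  | app M N ihM ihN =>
    obtain ⟨hM_abs, hM, hN⟩ := isBetaEtaNormal_app.1 h
    exact isBetaEtaNormal_app.2 ⟨isAbs_lift.not.2 hM_abs, ihM hM d, ihN hN d⟩
  | lam M ih =>
    obtain ⟨hM, h_eta⟩ := isBetaEtaNormal_lam.1 h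
    refine isBetaEtaNormal_lam.2 ⟨ih hM (d + 1), fun N hN => ?_⟩
    rcases M with n | ⟨P, R⟩ | P
    · rw [Lam.lift] at hN
      split_ifs at hN
    · obtain ⟨rfl, hR⟩ := app.inj hN
      exact (hasFree_lift_of_lt P d.succ_pos).2 (h_eta P (by rw [eq_var_zero_of_lift hR]))
    · cases hN

theorem applyAll_append_singleton (M : Lam) (Ms : List Lam) (N : Lam) :
    applyAll M (Ms ++ [N]) = app (applyAll M Ms) N := by
  induction Ms generalizing M with
  | nil => rfl
  | cons P _ ih => exact ih (app M P)

theorem IsBetaEtaNormal.exists_eq_applyAll_var {M : Lam} (h : IsBetaEtaNormal M)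
    (h_abs : ¬ IsAbs M) :
    ∃ i Ms, M = applyAll (var i) Ms ∧ ∀ N ∈ Ms, IsBetaEtaNormal N := by
  induction M with
  | var n => exact ⟨n, [], rfl, by simp⟩
  | app M N ihM _ =>
    obtain ⟨hM_abs, hM, hN⟩ := isBetaEtaNormal_app.1 h
    obtain ⟨i, Ms, rfl, hMs⟩ := ihM hM hM_abs
    refine ⟨i, Ms ++ [N], (applyAll_append_singleton _ Ms N).symm, ?_⟩
    simpa [or_imp, forall_and] using ⟨hMs, hN⟩
  | lam M _ => exact absurd trivial h_abs

/-- The body of an abstraction, or of the η-expansion `λx.(M x)` of another term. -/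
def etaBody : Lam → Lam
  | lam M => M
  | M => app (lift 0 M) (var 0)

theorem IsBetaEtaNormal.etaBody {M : Lam} (h : IsBetaEtaNormal M) :
    IsBetaEtaNormal (etaBody M) := by
  cases M with
  | lam M => exact (isBetaEtaNormal_lam.1 h).1
  | _ => exact isBetaEtaNormal_app.2 ⟨isAbs_lift.not.2 id, h.lift 0, trivial⟩

theorem IsBetaEtaNormal.etaBody_ne_of_lam {M N : Lam} (h : IsBetaEtaNormal (lam M))
    (hne : lam M ≠ N) : M ≠ Lam.etaBody N := by
  cases N with
  | lam N => exact fun h_eq => hne (congrArg lam h_eq)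
  | _ => exact fun h_eq => not_hasFree_lift 0 _ ((isBetaEtaNormal_lam.1 h).2 _ h_eq)

theorem IsBetaEtaNormal.etaBody_ne {M N : Lam} (hM : IsBetaEtaNormal M) (hN : IsBetaEtaNormal N)
    (h_abs : IsAbs M ∨ IsAbs N) (hne : M ≠ N) : Lam.etaBody M ≠ Lam.etaBody N := by
  rcases h_abs with h | h
  · cases M with
    | lam M => exact hM.etaBody_ne_of_lam hne
    | _ => cases h
  · cases N with
    | lam N => exact (hN.etaBody_ne_of_lam hne.symm).symm
    | _ => cases h

theorem interp_etaBody (ρ : Stream' ClosedModel) (M : Lam) (x : ClosedModel) :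
    interp (x :: ρ) (etaBody M) = interp ρ M ⋄ x := by
  cases M with
  | lam M => exact (interp_lam_ap ρ M x).symm
  | _ => simp only [etaBody, interp_app (x :: ρ), interp_lift, interp_var (x :: ρ), get_zero_cons]

/-- A size in which an abstraction outweighs the application created by one η-expansion. -/
def size : Lam → ℕ
  | var _ => 1
  | app M N => size M + size N
  | lam M => size M + 2

theorem size_pos (M : Lam) : 0 < size M := by
  induction M with
  | var _ => exact one_pos
  | app M N ihM _ => exact Nat.add_pos_left ihM _
  | lam M _ => exact Nat.succ_pos _

theorem size_lift (d : ℕ) (M : Lam) : size (lift d M) = size M := by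
  induction M generalizing d with
  | var n =>
    rw [lift]
    split_ifs <;> rfl
  | app M N ihM ihN => simp [lift, size, ihM, ihN]
  | lam M ih => simp [lift, size, ih]

theorem size_etaBody_add_lt {M N : Lam} (h : IsAbs M ∨ IsAbs N) :
    size (etaBody M) + size (etaBody N) < size M + size N := by
  cases M <;> cases N <;> simp_all [etaBody, size, size_lift] <;> omega

theorem size_applyAll (M : Lam) (Ms : List Lam) :
    size (applyAll M Ms) = size M + (Ms.map size).sum := by
  induction Ms generalizing M with
  | nil => rfl
  | cons N Ms ih => rw [applyAll, ih, size, List.map_cons, List.sum_cons, add_assoc]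

theorem length_lt_size_applyAll (M : Lam) (Ms : List Lam) : Ms.length < size (applyAll M Ms) := by
  have h_length : (Ms.map size).length ≤ (Ms.map size).sum :=
    List.length_le_sum_of_one_le _ (by simp [Nat.one_le_iff_ne_zero, (size_pos _).ne'])
  rw [size_applyAll]
  rw [List.length_map] at h_length
  have := size_pos M
  omega

theorem size_lt_size_applyAll {N : Lam} (M : Lam) {Ms : List Lam} (h : N ∈ Ms) :
    size N < size (applyAll M Ms) := by
  have h_sum : size N ≤ (Ms.map size).sum := List.le_sum_of_mem (List.mem_map_of_mem h)
  rw [size_applyAll]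
  have := size_pos M
  omega

/-! ### Böhm's theorem -/

open CombinatoryAlgebra (Separable permutator separable_permutator_of_ne)

/-- The arity of the permutator assigned to the variable `v` under `k` binders. It depends only on
the de Bruijn level `k - v`, and the arities of distinct variables are at least `L` apart. -/
def arity (L k v : ℕ) : ℕ := L * (Encodable.encode ((k : ℤ) - v) + 1)

theorem le_arity (L k v : ℕ) : L ≤ arity L k v := Nat.le_mul_of_pos_right L (Nat.succ_pos _)

theorem arity_add_le_or {L k v w : ℕ} (h : v ≠ w) :
    arity L k v + L ≤ arity L k w ∨ arity L k w + L ≤ arity L k v := by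
  have h_code : Encodable.encode ((k : ℤ) - v) ≠ Encodable.encode ((k : ℤ) - w) := by
    rw [Encodable.encode_injective.ne_iff]
    omega
  exact h_code.lt_or_gt.imp (Nat.mul_le_mul_left L <| Nat.succ_le_succ ·)
    (Nat.mul_le_mul_left L <| Nat.succ_le_succ ·)

/-- The valuation sending the variable `v` to the permutator of arity `arity L k v`. -/
def permutatorEnv (L k : ℕ) : Stream' ClosedModel := fun v => permutator (arity L k v)

theorem permutatorEnv_succ (L k : ℕ) :
    permutatorEnv L (k + 1) = permutator (arity L (k + 1) 0) :: permutatorEnv L k := by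
  ext (_ | v)
  · rfl
  · simp [permutatorEnv, Stream'.get, Stream'.cons, arity]

theorem separable_interp_applyAll_var {L k i j : ℕ} {Ms Ns : List Lam} (hMs : Ms.length < L)
    (hNs : Ns.length < L) (hne : applyAll (var i) Ms ≠ applyAll (var j) Ns)
    (h_args : ∀ M ∈ Ms, ∀ N ∈ Ns, M ≠ N →
      Separable (interp (permutatorEnv L k) M) (interp (permutatorEnv L k) N)) :
    Separable (interp (permutatorEnv L k) (applyAll (var i) Ms))
      (interp (permutatorEnv L k) (applyAll (var j) Ns)) := by
  have hi := le_arity L k i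
  have hj := le_arity L k j
  simp only [interp_applyAll, interp_var]
  by_cases h_same : i = j ∧ Ms.length = Ns.length
  · obtain ⟨rfl, h_length⟩ := h_same
    obtain ⟨n, hn, hn', h_arg⟩ : ∃ n, ∃ (hn : n < Ms.length) (hn' : n < Ns.length),
        Ms[n] ≠ Ns[n] := by
      by_contra! h
      exact hne (congrArg _ (List.ext_getElem h_length h))
    exact .of_getElem (i := n) (by simpa using h_length) (by simp; omega) (by simpa using hn)
      (by simpa using h_args _ (List.getElem_mem hn) _ (List.getElem_mem hn') h_arg)
  · have h_residual : arity L k i - Ms.length ≠ arity L k j - Ns.length := by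
      by_cases hij : i = j
      · subst hij
        have := mt (And.intro rfl) h_same
        omega
      · have := arity_add_le_or (L := L) (k := k) hij
        omega
    refine separable_permutator_of_ne ?_ ?_ h_residual <;> simp <;> omega

theorem IsBetaEtaNormal.separable_interp {L : ℕ} {M N : Lam} (hM : IsBetaEtaNormal M)
    (hN : IsBetaEtaNormal N) (hne : M ≠ N) (hL : size M + size N ≤ L) (k : ℕ) :
    Separable (interp (permutatorEnv L k) M) (interp (permutatorEnv L k) N) := by
  by_cases h_abs : IsAbs M ∨ IsAbs N
  · have h_size := size_etaBody_add_lt h_abs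
    refine .of_applyAll [permutator (arity L (k + 1) 0)] ?_
    rw [CombinatoryAlgebra.applyAll_cons, CombinatoryAlgebra.applyAll_cons, ← interp_etaBody,
      ← interp_etaBody, ← permutatorEnv_succ]
    exact hM.etaBody.separable_interp hN.etaBody (hM.etaBody_ne hN h_abs hne) (by omega) (k + 1)
  · rw [not_or] at h_abs
    obtain ⟨i, Ms, rfl, hMs⟩ := hM.exists_eq_applyAll_var h_abs.1
    obtain ⟨j, Ns, rfl, hNs⟩ := hN.exists_eq_applyAll_var h_abs.2
    have hMs_length := length_lt_size_applyAll (var i) Ms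
    have hNs_length := length_lt_size_applyAll (var j) Ns
    refine separable_interp_applyAll_var (by omega) (by omega) hne fun P hP Q hQ h_ne => ?_
    have hP_size := size_lt_size_applyAll (var i) hP
    have hQ_size := size_lt_size_applyAll (var j) hQ
    exact (hMs P hP).separable_interp (hNs Q hQ) h_ne (by omega) k
termination_by size M + size N

theorem IsBetaEtaNormal.separable_toModel {M N : Lam} (hM : IsBetaEtaNormal M)
    (hN : IsBetaEtaNormal N) (hM_closed : Closed M) (hN_closed : Closed N) (hne : M ≠ N) :
    Separable hM_closed.toModel hN_closed.toModel := by
  have h := hM.separable_interp hN hne le_rfl 0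
  rwa [hM_closed.interp_eq, hN_closed.interp_eq] at h

/-! ### Numeral systems -/

/-- The function `φ : ℕ^p → ℕ` is λ-definable with respect to `d`. -/
def LambdaDefinable (d : ℕ → Lam) {p : ℕ} (φ : (Fin p → ℕ) → ℕ) : Prop :=
  ∃ F, Closed F ∧ ∀ ns : Fin p → ℕ,
    BetaEq (applyAll F (List.ofFn fun i => d (ns i))) (d (φ ns))

/-- The curried binary function `f` is λ-definable with respect to `d`. -/
def LambdaDefinable₂ (d : ℕ → Lam) (f : ℕ → ℕ → ℕ) : Prop :=
  ∃ F, Closed F ∧ ∀ n m, BetaEq (app (app F (d n)) (d m)) (d (f n m))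

variable {d : ℕ → Lam}

theorem LambdaDefinable.lambdaDefinable₂ {f : ℕ → ℕ → ℕ}
    (h : LambdaDefinable d fun ns : Fin 2 → ℕ => f (ns 0) (ns 1)) : LambdaDefinable₂ d f :=
  let ⟨F, hF, h_eq⟩ := h
  ⟨F, hF, fun n m => by simpa [applyAll, List.ofFn_succ] using h_eq ![n, m]⟩

theorem LambdaDefinable₂.exists_toModel (hc : ∀ n, Closed (d n)) {f : ℕ → ℕ → ℕ}
    (h : LambdaDefinable₂ d f) :
    ∃ x : ClosedModel, ∀ n m, x ⋄ (hc n).toModel ⋄ (hc m).toModel = (hc (f n m)).toModel :=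
  let ⟨_, hF, h_eq⟩ := h
  ⟨hF.toModel, fun n m =>
    (((hF.app (hc n)).app (hc m)).toModel_eq_iff (hc (f n m))).2 (h_eq n m)⟩

theorem toModel_applyAll {M : Lam} (hM : Closed M) (hc : ∀ n, Closed (d n)) {p : ℕ}
    (ns : Fin p → ℕ) (h : Closed (applyAll M (List.ofFn fun i => d (ns i)))) :
    h.toModel =
      CombinatoryAlgebra.applyAll hM.toModel (List.ofFn fun i => (hc (ns i)).toModel) := by
  have h_interp := interp_applyAll (.const hM.toModel) M (List.ofFn fun i => d (ns i))
  simpa only [h.interp_eq, hM.interp_eq, List.map_ofFn, Function.comp_def,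
    (hc _).interp_eq] using h_interp

theorem lambdaDefinable_of_adequate (hc : ∀ n, Closed (d n))
    (h : CombinatoryAlgebra.Adequate fun n => (hc n).toModel) {p : ℕ} {φ : (Fin p → ℕ) → ℕ}
    (hφ : Computable φ) : LambdaDefinable d φ := by
  obtain ⟨x, hx⟩ := h.exists_applyAll_eq hφ
  refine ⟨x.out, x.out.2, fun ns => ?_⟩
  have h_closed : Closed (applyAll x.out (List.ofFn fun i => d (ns i))) :=
    x.out.2.applyAll (by simp [hc])
  rw [← h_closed.toModel_eq_iff (hc (φ ns)), toModel_applyAll x.out.2 hc, x.toModel_out]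
  exact hx ns

end Lam

/-! ### The function `k` -/

theorem kFun_zero_right (n : ℕ) : kFun n 0 = n + 1 := by simp [kFun]

theorem kFun_succ_one (n : ℕ) : kFun (n + 1) 1 = n := by simp [kFun, Nat.dist]

theorem kFun_succ_self (n : ℕ) : kFun (n + 1) (n + 1) = 0 := by simp [kFun]

theorem computable_kFun : Computable fun p : ℕ × ℕ => kFun p.1 p.2 := by
  have h_succ : Primrec fun p : ℕ × ℕ => p.1 + 1 := Primrec.succ.comp .fst
  have h_dist : Primrec fun p : ℕ × ℕ => Nat.dist p.1 p.2 :=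
    Primrec.nat_add.comp (Primrec.nat_sub.comp .fst .snd) (Primrec.nat_sub.comp .snd .fst)
  exact (Primrec.ite (Primrec.eq.comp .snd (.const 0)) h_succ h_dist).to_comp

namespace CombinatoryAlgebra

open CombPoly

theorem Adequate.of_kFun {A : Type*} [CombinatoryAlgebra A] {D : ℕ → A} {x : A}
    (hx : ∀ n m, x ⋄ D n ⋄ D m = D (kFun n m)) (h_sep : Separable (D 1) (D 0)) : Adequate D := by
  obtain ⟨g, h_one, h_zero⟩ := h_sep.exists_ap_eq K (K ⋄ I)
  refine ⟨⟨eval [] (ƛ ↟x ⋆ .var 0 ⋆ ↟(D 0)), ?succ⟩, ⟨eval [] (ƛ ↟x ⋆ .var 0 ⋆ ↟(D 1)), ?pred⟩,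
    ⟨eval [] (ƛ ↟g ⋆ (↟x ⋆ .var 0 ⋆ .var 0)), ?isZero_zero, ?isZero_succ⟩⟩
  case succ => simp [hx, kFun_zero_right]
  case pred => simp [hx, kFun_succ_one]
  case isZero_zero => simp [hx, kFun_zero_right, h_one]
  case isZero_succ => simp [hx, kFun_succ_self, h_zero]

end CombinatoryAlgebra

open Lam in
theorem statement15_general :
    Computable (fun p : ℕ × ℕ => kFun p.1 p.2) ∧
    ∀ d : ℕ → Lam, (∀ n, Closed (d n)) → IsBetaEtaNormal (d 0) → IsBetaEtaNormal (d 1) →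
      d 0 ≠ d 1 →
      (LambdaDefinable₂ d kFun ↔
        ∀ p : ℕ, 1 ≤ p → ∀ φ : (Fin p → ℕ) → ℕ, Computable φ → LambdaDefinable d φ) := by
  refine ⟨computable_kFun, fun d hc h_zero h_one hne => ⟨fun h p _ φ hφ => ?_, fun h => ?_⟩⟩
  · obtain ⟨x, hx⟩ := h.exists_toModel hc
    have h_sep := h_one.separable_toModel h_zero (hc 1) (hc 0) hne.symm
    exact lambdaDefinable_of_adequate hc (.of_kFun hx h_sep) hφ
  · have h_coord (i : Fin 2) : Computable fun ns : Fin 2 → ℕ => ns i :=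
      Computable.fin_app.comp .id (.const i)
    exact (h 2 one_le_two _ (computable_kFun.comp ((h_coord 0).pair (h_coord 1)))).lambdaDefinable₂

/-- The function `k` is total recursive, and for every numeral system `d`, `k` is
λ-definable with respect to `d` iff every total recursive function `ℕ^p → ℕ` is
λ-definable with respect to `d`. -/
theorem statement15 :
    Computable (fun p : ℕ × ℕ => kFun p.1 p.2) ∧
    ∀ d : ℕ → Lam, (∀ n, Lam.Closed (d n)) → (∀ n, Lam.IsBetaEtaNormal (d n)) →
      Function.Injective d →
      ((∃ Fk, Lam.Closed Fk ∧
          ∀ n m, Lam.BetaEq (Lam.app (Lam.app Fk (d n)) (d m)) (d (kFun n m))) ↔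
        (∀ p : ℕ, 1 ≤ p → ∀ φ : (Fin p → ℕ) → ℕ, Computable φ →
          ∃ Fφ, Lam.Closed Fφ ∧ ∀ ns : Fin p → ℕ,
            Lam.BetaEq (Lam.applyAll Fφ (List.ofFn fun i => d (ns i))) (d (φ ns)))) :=
  statement15_general.imp_right fun h d hc hn hi => h d hc (hn 0) (hn 1) (hi.ne zero_ne_one)
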